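/- For every ε > 0 there exists N such that for all n ≥ N, the number S(n) of multiplicative Sidon subsets of [n] satisfies S(n) ≥ T(n) · 2^{(√2 − ε)·n^{3/4}/(log n)^{3/2}}, where log denotes the natural logarithm. -/

import Mathlib

open scoped Classical

/-- A finite set of naturals is multiplicative Sidon if it contains no four
distinct elements `a₁, a₂, b₁, b₂` with `a₁ * a₂ = b₁ * b₂`. -/
def MulSidon (A : Finset ℕ) : Prop :=
  ¬ ∃ a₁ a₂ b₁ b₂, a₁ ∈ A ∧ a₂ ∈ A ∧ b₁ ∈ A ∧ b₂ ∈ A ∧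
    a₁ ≠ a₂ ∧ a₁ ≠ b₁ ∧ a₁ ≠ b₂ ∧ a₂ ≠ b₁ ∧ a₂ ≠ b₂ ∧ b₁ ≠ b₂ ∧
    a₁ * a₂ = b₁ * b₂

/-- `S n`: the number of multiplicative Sidon subsets of `{1, …, n}`. -/
noncomputable def S (n : ℕ) : ℕ :=
  ((Finset.Icc 1 n).powerset.filter (fun A => MulSidon A)).card

/-- `T n = ∏_{p prime, n^{2/3} < p ≤ n} (⌊n/p⌋ + 1)`. -/
noncomputable def T (n : ℕ) : ℕ :=
  ∏ p ∈ (Finset.Icc 1 n).filter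
      (fun p => Nat.Prime p ∧ (n : ℝ) ^ ((2 : ℝ)/3) < (p : ℝ)),
    (n / p + 1)

/-!
A subset of `{1, …, n}` obtained from a multiplicative Sidon set by adding at most one multiple of
each prime `p > n^(2/3)` remains multiplicative Sidon, as long as these primes divide nothing else
in it. If `E` is a multiplicative Sidon set of `n^(2/3)`-smooth numbers, all these choices may be
made independently of each other and of a subset of `E`, so that `T n * 2 ^ #E ≤ S n`.

To find `E`, number the primes `p₀ < p₁ < …` and take the products `pᵢ pⱼ` over the edges `ij` of a
graph without 4-cycles. For a prime `q`, the complete graph on `q²` vertices is partitioned into `q`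
such graphs, the affine polarity graphs `x₂ + y₂ = x₁ y₁ + t` over `ZMod q`. Chebyshev's bound gives
`pᵢ pⱼ ≤ n` as soon as `(i + 1) (j + 1) ≤ M`, where `M ~ (2 log 2)² n / (log n)²`. About
`M (1 + log (q⁴ / M)) / 2` edges lie under this hyperbola, and one of the `q` graphs contains a
proportion at least `1 / q` of them. Bertrand's postulate locates `q` up to a factor `2`; in the worst case `#E`
is about `2 √2 e^(1/4) (log 2)^(5/2) n^(3/4) / (log n)^(3/2)`, and this constant, about `1.45`,
exceeds `√2`.
-/

open Filter Finset Real

section Counting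

/-- The multiplicative Sidon subsets of `B`. Letting `B` vary, rather than only counting inside
`{1, …, n}` as `S n` does, allows one prime at a time to be added. -/
noncomputable def mulSidonSubsets (B : Finset ℕ) : Finset (Finset ℕ) :=
  {A ∈ B.powerset | MulSidon A}

lemma mem_mulSidonSubsets {A B : Finset ℕ} : A ∈ mulSidonSubsets B ↔ A ⊆ B ∧ MulSidon A := by
  rw [mulSidonSubsets, mem_filter, mem_powerset]

lemma mulSidonSubsets_mono : Monotone mulSidonSubsets := fun _ _ hBC _ hA ↦
  have ⟨hAB, hA⟩ := mem_mulSidonSubsets.1 hA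
  mem_mulSidonSubsets.2 ⟨hAB.trans hBC, hA⟩

lemma MulSidon.subset {A B : Finset ℕ} (hB : MulSidon B) (hAB : A ⊆ B) : MulSidon A := by
  rintro ⟨a₁, a₂, b₁, b₂, ha₁, ha₂, hb₁, hb₂, h⟩
  exact hB ⟨a₁, a₂, b₁, b₂, hAB ha₁, hAB ha₂, hAB hb₁, hAB hb₂, h⟩

lemma MulSidon.card_mulSidonSubsets {E : Finset ℕ} (hE : MulSidon E) :
    #(mulSidonSubsets E) = 2 ^ #E := by
  rw [mulSidonSubsets, filter_true_of_mem fun A hA ↦ hE.subset (mem_powerset.1 hA), card_powerset]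

lemma MulSidon.insert_of_prime_dvd {A : Finset ℕ} {p c : ℕ} (hA : MulSidon A) (hp : p.Prime)
    (hpA : ∀ a ∈ A, ¬p ∣ a) (hpc : p ∣ c) : MulSidon (insert c A) := by
  have eq_of_dvd {x : ℕ} (hx : x ∈ insert c A) (hpx : p ∣ x) : x = c :=
    (mem_insert.1 hx).resolve_right fun hxA ↦ hpA x hxA hpx
  have mem_of_mul_eq {x y z w : ℕ} (hx : x ∈ insert c A) (hy : y ∈ insert c A)
      (hz : z ∈ insert c A) (hxy : x ≠ y) (hxz : x ≠ z) (h : x * w = y * z) : x ∈ A := by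
    refine (mem_insert.1 hx).resolve_left ?_
    rintro rfl
    rcases hp.dvd_mul.1 (h ▸ hpc.mul_right w) with hpy | hpz
    · exact hxy (eq_of_dvd hy hpy).symm
    · exact hxz (eq_of_dvd hz hpz).symm
  rintro ⟨a₁, a₂, b₁, b₂, ha₁, ha₂, hb₁, hb₂, haa, h₁₁, h₁₂, h₂₁, h₂₂, hbb, h⟩
  exact hA ⟨a₁, a₂, b₁, b₂,
    mem_of_mul_eq ha₁ hb₁ hb₂ h₁₁ h₁₂ h,
    mem_of_mul_eq ha₂ hb₁ hb₂ h₂₁ h₂₂ (mul_comm a₂ a₁ ▸ h),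
    mem_of_mul_eq hb₁ ha₁ ha₂ h₁₁.symm h₂₁.symm h.symm,
    mem_of_mul_eq hb₂ ha₁ ha₂ h₁₂.symm h₂₂.symm (mul_comm b₂ b₁ ▸ h.symm),
    haa, h₁₁, h₁₂, h₂₁, h₂₂, hbb, h⟩

lemma card_add_one_mul_card_mulSidonSubsets_le {B C : Finset ℕ} {p : ℕ} (hp : p.Prime)
    (hB : ∀ b ∈ B, ¬p ∣ b) (hC : ∀ c ∈ C, p ∣ c) :
    (#C + 1) * #(mulSidonSubsets B) ≤ #(mulSidonSubsets (C ∪ B)) := by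
  rw [← card_insertNone, ← card_product]
  refine card_le_card_of_injOn (fun x ↦ x.1.toFinset ∪ x.2) ?_ ?_
  · rintro ⟨_ | c, A⟩ h
    all_goals
      obtain ⟨hc, hA⟩ := mem_product.1 h
      obtain ⟨hAB, hA⟩ := mem_mulSidonSubsets.1 hA
    · simpa using mem_mulSidonSubsets.2 ⟨hAB.trans subset_union_right, hA⟩
    · have hcC : c ∈ C := some_mem_insertNone.1 hc
      simpa using mem_mulSidonSubsets.2 ⟨insert_subset (mem_union_left B hcC)
        (hAB.trans subset_union_right),
        hA.insert_of_prime_dvd hp (fun a ha ↦ hB a (hAB ha)) (hC c hcC)⟩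
  · have mem_iff {x : Option ℕ × Finset ℕ} (hx : x ∈ insertNone C ×ˢ mulSidonSubsets B) (a : ℕ) :
        (a ∈ x.1 ↔ a ∈ x.1.toFinset ∪ x.2 ∧ p ∣ a) ∧
          (a ∈ x.2 ↔ a ∈ x.1.toFinset ∪ x.2 ∧ ¬p ∣ a) := by
      obtain ⟨hc, hA⟩ := mem_product.1 hx
      have hxC : a ∈ x.1 → p ∣ a := fun ha ↦ hC a (mem_insertNone.1 hc a ha)
      have hxB : a ∈ x.2 → ¬p ∣ a := fun ha ↦ hB a ((mem_mulSidonSubsets.1 hA).1 ha)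
      rw [mem_union, Option.mem_toFinset]
      tauto
    intro x hx y hy (hxy : x.1.toFinset ∪ x.2 = y.1.toFinset ∪ y.2)
    refine Prod.ext (Option.ext fun a ↦ ?_) (Finset.ext fun a ↦ ?_)
    · exact (mem_iff hx a).1.trans (hxy ▸ (mem_iff hy a).1.symm)
    · exact (mem_iff hx a).2.trans (hxy ▸ (mem_iff hy a).2.symm)

lemma prod_card_add_one_mul_card_mulSidonSubsets_le {E P : Finset ℕ} {C : ℕ → Finset ℕ}
    (hP : ∀ p ∈ P, p.Prime) (hE : ∀ p ∈ P, ∀ e ∈ E, ¬p ∣ e) (hC : ∀ p ∈ P, ∀ c ∈ C p, p ∣ c)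
    (hPC : ∀ p ∈ P, ∀ r ∈ P, p ≠ r → ∀ c ∈ C r, ¬p ∣ c) :
    (∏ p ∈ P, (#(C p) + 1)) * #(mulSidonSubsets E) ≤ #(mulSidonSubsets (P.biUnion C ∪ E)) := by
  induction P using Finset.induction with
  | empty => simp
  | insert p P hpP ih =>
    simp only [forall_mem_insert] at hP hE hC hPC
    have hp_not_dvd : ∀ b ∈ P.biUnion C ∪ E, ¬p ∣ b := by
      intro b hb
      rcases mem_union.1 hb with hb | hb
      · obtain ⟨r, hr, hbr⟩ := mem_biUnion.1 hb
        exact hPC.1.2 r hr (ne_of_mem_of_not_mem hr hpP).symm b hbr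
      · exact hE.1 b hb
    calc (∏ r ∈ insert p P, (#(C r) + 1)) * #(mulSidonSubsets E)
        = (#(C p) + 1) * ((∏ r ∈ P, (#(C r) + 1)) * #(mulSidonSubsets E)) := by
          rw [prod_insert hpP, mul_assoc]
      _ ≤ (#(C p) + 1) * #(mulSidonSubsets (P.biUnion C ∪ E)) := by
          gcongr
          exact ih hP.2 hE.2 hC.2 fun r hr ↦ (hPC.2 r hr).2
      _ ≤ #(mulSidonSubsets (C p ∪ (P.biUnion C ∪ E))) :=
          card_add_one_mul_card_mulSidonSubsets_le hP.1 hp_not_dvd hC.1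
      _ = #(mulSidonSubsets ((insert p P).biUnion C ∪ E)) := by
          rw [biUnion_insert, union_assoc]

lemma prod_div_add_one_mul_two_pow_card_le_S {n : ℕ} {P E : Finset ℕ}
    (hP : ∀ p ∈ P, p.Prime ∧ n < p * p) (hE : MulSidon E) (hEn : E ⊆ Icc 1 n)
    (hPE : ∀ p ∈ P, ∀ e ∈ E, ¬p ∣ e) :
    (∏ p ∈ P, (n / p + 1)) * 2 ^ #E ≤ S n := by
  let multiples (p : ℕ) : Finset ℕ := {x ∈ Ioc 0 n | p ∣ x}
  have hcard (p : ℕ) : #(multiples p) = n / p := Nat.Ioc_filter_dvd_card_eq_div n p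
  -- A common multiple of two distinct primes of `P` exceeds `n`.
  have hdisj : ∀ p ∈ P, ∀ r ∈ P, p ≠ r → ∀ c ∈ multiples r, ¬p ∣ c := by
    intro p hp r hr hpr c hc hpc
    obtain ⟨hc, hrc⟩ := mem_filter.1 hc
    obtain ⟨hc0, hcn⟩ := mem_Ioc.1 hc
    have hprc : p * r ≤ c := Nat.le_of_dvd hc0 <|
      ((Nat.coprime_primes (hP p hp).1 (hP r hr).1).2 hpr).mul_dvd_of_dvd_of_dvd hpc hrc
    rcases le_total p r with hle | hle
    · exact ((hP p hp).2.trans_le (Nat.mul_le_mul_left p hle)).not_ge (hprc.trans hcn)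
    · exact ((hP r hr).2.trans_le (Nat.mul_le_mul_right r hle)).not_ge (hprc.trans hcn)
  simp only [← hcard, ← hE.card_mulSidonSubsets]
  refine (prod_card_add_one_mul_card_mulSidonSubsets_le (fun p hp ↦ (hP p hp).1) hPE
    (fun p _ c hc ↦ (mem_filter.1 hc).2) hdisj).trans (card_le_card (mulSidonSubsets_mono ?_))
  exact union_subset (biUnion_subset.2 fun p _ ↦ filter_subset _ _) hEn

end Counting

section Graph

variable {V : Type*} {f : V → ℕ}

/-- The product of the labels of the two endpoints of an edge. With distinct primes as labels, it
turns a graph without 4-cycles into a multiplicative Sidon set. -/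
def edgeProd (f : V → ℕ) (e : Sym2 V) : ℕ := (e.map f).mul

lemma edgeProd_mk (i j : V) : edgeProd f s(i, j) = f i * f j := rfl

lemma mem_of_dvd_edgeProd (hf : ∀ v, (f v).Prime) (hinj : f.Injective) {i : V} {e : Sym2 V}
    (h : f i ∣ edgeProd f e) : i ∈ e := by
  induction e with
  | _ u v =>
    rw [edgeProd_mk, (hf i).dvd_mul, Nat.prime_dvd_prime_iff_eq (hf i) (hf u),
      Nat.prime_dvd_prime_iff_eq (hf i) (hf v), hinj.eq_iff, hinj.eq_iff] at h
    exact Sym2.mem_iff.2 h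

lemma edgeProd_injective (hf : ∀ v, (f v).Prime) (hinj : f.Injective) :
    (edgeProd f).Injective := by
  intro e₁ e₂ h
  induction e₁ with
  | _ i j =>
    obtain ⟨v, rfl⟩ := mem_of_dvd_edgeProd hf hinj (h ▸ Dvd.intro _ rfl : f i ∣ edgeProd f e₂)
    rw [edgeProd_mk, edgeProd_mk] at h
    rw [hinj (Nat.eq_of_mul_eq_mul_left (hf i).pos h)]

variable {G : SimpleGraph V}

/-- If `e₃ = {i, v}` and `j ≠ v`, then unique factorization forces `e₄ = {j, y}` and `e₂ = {v, y}`,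
so that `j` and `v` are both common neighbours of `i` and `y`. -/
lemma eq_or_eq_of_edgeProd_mul_eq_of_mem (hf : ∀ v, (f v).Prime) (hinj : f.Injective)
    (hG : ∀ a c, a ≠ c → (G.commonNeighbors a c).Subsingleton) {i j : V} {e₂ e₃ e₄ : Sym2 V}
    (h₁ : s(i, j) ∈ G.edgeSet) (h₂ : e₂ ∈ G.edgeSet) (h₃ : e₃ ∈ G.edgeSet) (h₄ : e₄ ∈ G.edgeSet)
    (hi : i ∈ e₃)
    (h : edgeProd f s(i, j) * edgeProd f e₂ = edgeProd f e₃ * edgeProd f e₄) :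
    s(i, j) = e₃ ∨ s(i, j) = e₄ := by
  obtain ⟨v, rfl⟩ := hi
  have hcancel : f j * edgeProd f e₂ = f v * edgeProd f e₄ := by
    simp only [edgeProd_mk, mul_assoc] at h
    exact Nat.eq_of_mul_eq_mul_left (hf i).pos h
  rcases (hf j).dvd_mul.1 (hcancel ▸ Dvd.intro _ rfl) with hjv | hje
  · exact .inl (by rw [hinj ((Nat.prime_dvd_prime_iff_eq (hf j) (hf v)).1 hjv)])
  obtain ⟨y, rfl⟩ := mem_of_dvd_edgeProd hf hinj hje
  have he₂ : e₂ = s(v, y) := edgeProd_injective hf hinj <|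
    Nat.eq_of_mul_eq_mul_left (hf j).pos (hcancel.trans (mul_left_comm _ _ _))
  subst he₂
  by_cases hiy : i = y
  · exact .inr (hiy ▸ Sym2.eq_swap)
  · have hjv : j = v := hG i y hiy ⟨h₁, h₄.symm⟩ ⟨h₃, h₂.symm⟩
    exact .inl (by rw [hjv])

lemma eq_or_eq_of_edgeProd_mul_eq (hf : ∀ v, (f v).Prime) (hinj : f.Injective)
    (hG : ∀ a c, a ≠ c → (G.commonNeighbors a c).Subsingleton) {e₁ e₂ e₃ e₄ : Sym2 V}
    (h₁ : e₁ ∈ G.edgeSet) (h₂ : e₂ ∈ G.edgeSet) (h₃ : e₃ ∈ G.edgeSet) (h₄ : e₄ ∈ G.edgeSet)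
    (h : edgeProd f e₁ * edgeProd f e₂ = edgeProd f e₃ * edgeProd f e₄) :
    e₁ = e₃ ∨ e₁ = e₄ := by
  induction e₁ with
  | _ i j =>
    have hi : f i ∣ edgeProd f e₃ * edgeProd f e₄ := h ▸ (Dvd.intro _ rfl).mul_right _
    rcases (hf i).dvd_mul.1 hi with hi | hi
    · exact eq_or_eq_of_edgeProd_mul_eq_of_mem hf hinj hG h₁ h₂ h₃ h₄
        (mem_of_dvd_edgeProd hf hinj hi) h
    · exact (eq_or_eq_of_edgeProd_mul_eq_of_mem hf hinj hG h₁ h₂ h₄ h₃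
        (mem_of_dvd_edgeProd hf hinj hi) (h.trans (mul_comm _ _))).symm

lemma mulSidon_image_edgeProd (hf : ∀ v, (f v).Prime) (hinj : f.Injective)
    (hG : ∀ a c, a ≠ c → (G.commonNeighbors a c).Subsingleton) {D : Finset (Sym2 V)}
    (hD : ∀ e ∈ D, e ∈ G.edgeSet) : MulSidon (D.image (edgeProd f)) := by
  rintro ⟨a₁, a₂, b₁, b₂, ha₁, ha₂, hb₁, hb₂, -, h₁₁, h₁₂, -, -, -, h⟩
  obtain ⟨e₁, he₁, rfl⟩ := mem_image.1 ha₁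
  obtain ⟨e₂, he₂, rfl⟩ := mem_image.1 ha₂
  obtain ⟨e₃, he₃, rfl⟩ := mem_image.1 hb₁
  obtain ⟨e₄, he₄, rfl⟩ := mem_image.1 hb₂
  rcases eq_or_eq_of_edgeProd_mul_eq hf hinj hG (hD _ he₁) (hD _ he₂) (hD _ he₃) (hD _ he₄) h
    with rfl | rfl
  · exact h₁₁ rfl
  · exact h₁₂ rfl

variable {F : Type*} [Field F]

/-- The colour `x₂ + y₂ - x₁ y₁` of the pair `{x, y}` of points of the affine plane `F × F`; its
colour classes partition the complete graph into polarity graphs. -/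
def polarityColor : Sym2 (F × F) → F :=
  Sym2.lift ⟨fun x y ↦ x.2 + y.2 - x.1 * y.1, fun x y ↦ by ring⟩

/-- The graph on `F × F` whose edges are the pairs of colour `t`, i.e. `x₂ + y₂ = x₁ y₁ + t`:
an affine part of a polarity graph, without 4-cycles. -/
def polarityGraph (t : F) : SimpleGraph (F × F) := .fromEdgeSet (polarityColor ⁻¹' {t})

lemma polarityGraph_adj {t : F} {x y : F × F} :
    (polarityGraph t).Adj x y ↔ x.2 + y.2 - x.1 * y.1 = t ∧ x ≠ y := by
  rw [polarityGraph, SimpleGraph.fromEdgeSet_adj]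
  rfl

lemma polarityGraph_commonNeighbors_subsingleton (t : F) {x z : F × F} (hxz : x ≠ z) :
    ((polarityGraph t).commonNeighbors x z).Subsingleton := by
  rintro y ⟨hxy, hzy⟩ w ⟨hxw, hzw⟩
  obtain ⟨hxy, -⟩ := polarityGraph_adj.1 hxy
  obtain ⟨hzy, -⟩ := polarityGraph_adj.1 hzy
  obtain ⟨hxw, -⟩ := polarityGraph_adj.1 hxw
  obtain ⟨hzw, -⟩ := polarityGraph_adj.1 hzw
  have hmul : (x.1 - z.1) * (y.1 - w.1) = 0 := by linear_combination -hxy + hzy + hxw - hzw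
  rcases mul_eq_zero.1 hmul with h | h
  · have hfst : x.1 = z.1 := sub_eq_zero.1 h
    exact absurd (Prod.ext hfst (by linear_combination hxy - hzy + y.1 * hfst)) hxz
  · have hfst : y.1 = w.1 := sub_eq_zero.1 h
    exact Prod.ext hfst (by linear_combination hxy - hxw + x.1 * hfst)

/-- The edges of the complete graph on `F × F` are partitioned into `#F` graphs without 4-cycles;
one of them contains a proportion at least `1 / #F` of the edges in `D`. -/
lemma exists_mulSidon_subset_image_edgeProd [Fintype F] (hf : ∀ v, (f v).Prime)
    (hinj : f.Injective) (g : V ↪ F × F) {D : Finset (Sym2 V)} (hD : ∀ e ∈ D, ¬e.IsDiag) :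
    ∃ E ⊆ D.image (edgeProd f), MulSidon E ∧ #D ≤ Fintype.card F * #E := by
  let color (e : Sym2 V) : F := polarityColor (e.map g)
  obtain ⟨t, -, ht⟩ : ∃ t ∈ (univ : Finset F), (#D / Fintype.card F : ℚ) ≤ #{e ∈ D | color e = t} :=
    exists_le_card_fiber_of_nsmul_le_card_of_maps_to (fun _ _ ↦ mem_univ _) univ_nonempty
      (by rw [nsmul_eq_mul, card_univ, mul_div_cancel₀ _ (by simp)])
  let G := (polarityGraph t).comap g
  have hG (a c : V) (hac : a ≠ c) : (G.commonNeighbors a c).Subsingleton := fun _ hb _ hd ↦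
    g.injective (polarityGraph_commonNeighbors_subsingleton t (g.injective.ne hac) hb hd)
  refine ⟨_, image_subset_image (filter_subset (color · = t) D),
    mulSidon_image_edgeProd hf hinj hG fun e he ↦ ?_, ?_⟩
  · obtain ⟨heD, het⟩ := mem_filter.1 he
    induction e with
    | _ i j => exact polarityGraph_adj.2 ⟨het, g.injective.ne (hD _ heD)⟩
  · rw [card_image_of_injective _ (edgeProd_injective hf hinj)]
    rw [div_le_iff₀' (by simp [Fintype.card_pos])] at ht
    exact_mod_cast ht

end Graph

section Hyperbola

lemma log_add_one_le_log_add_inv {x : ℝ} (hx : 0 < x) : log (x + 1) ≤ log x + x⁻¹ := by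
  have hlog : log (x + 1) = log x + log (1 + x⁻¹) := by
    rw [← log_mul hx.ne' (by positivity), mul_add, mul_inv_cancel₀ hx.ne', mul_one]
  linarith [log_le_sub_one_of_pos (x := 1 + x⁻¹) (by positivity)]

lemma log_sub_log_le_sum_Ico_inv {a b : ℕ} (hab : a ≤ b) :
    log (b + 1) - log (a + 1) ≤ ∑ i ∈ Ico a b, ((i : ℝ) + 1)⁻¹ := by
  rw [← sum_Ico_sub (fun i : ℕ ↦ log ((i : ℝ) + 1)) hab]
  gcongr with i
  rw [sub_le_iff_le_add', Nat.cast_succ]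
  exact log_add_one_le_log_add_inv (by positivity)

lemma mul_one_add_log_sub_le_sum_min {Q : ℕ} {M : ℝ} (hM : 0 < M) (hMQ : M ≤ (Q : ℝ) ^ 2) :
    M * (1 + log ((Q : ℝ) ^ 2 / M)) - 2 * Q ≤ ∑ i ∈ range Q, min (Q : ℝ) (M / (i + 1)) := by
  have hQ : (0 : ℝ) < Q := (Nat.cast_nonneg Q).lt_of_ne' fun hQ ↦ by
    rw [hQ] at hMQ
    linarith
  set a := ⌊M / Q⌋₊
  have ha_le : (a : ℝ) ≤ M / Q := Nat.floor_le (by positivity)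
  have ha_lt : M / Q < a + 1 := Nat.lt_floor_add_one _
  have haQ : a ≤ Q := Nat.cast_le.1 <| ha_le.trans <| (div_le_iff₀ hQ).2 <| hMQ.trans_eq (sq _)
  have hhead : ∑ i ∈ range a, min (Q : ℝ) (M / (i + 1)) = a * Q := by
    rw [sum_congr rfl fun i hi ↦ min_eq_left ?_, sum_const, card_range, nsmul_eq_mul]
    have hia : (i : ℝ) + 1 ≤ a := by exact_mod_cast mem_range.1 hi
    rw [le_div_comm₀ hQ (by positivity)]
    exact hia.trans ha_le
  have htail : ∑ i ∈ Ico a Q, min (Q : ℝ) (M / (i + 1)) = M * ∑ i ∈ Ico a Q, ((i : ℝ) + 1)⁻¹ := by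
    rw [mul_sum, sum_congr rfl fun i hi ↦ min_eq_right ?_]
    · simp only [div_eq_mul_inv]
    have hai : (a : ℝ) ≤ i := by exact_mod_cast (mem_Ico.1 hi).1
    rw [div_le_comm₀ (by positivity) hQ]
    linarith
  have hhead_ge : M - Q ≤ a * Q := by linarith [(div_lt_iff₀ hQ).1 ha_lt]
  have htail_ge : M * log Q - (M * log (M / Q) + Q) ≤ M * ∑ i ∈ Ico a Q, ((i : ℝ) + 1)⁻¹ := by
    calc M * log Q - (M * log (M / Q) + Q) ≤ M * log (Q + 1) - M * log (M / Q + 1) := by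
          have hlogQ : M * log Q ≤ M * log (Q + 1) := by gcongr; linarith
          have hlogM : M * log (M / Q + 1) ≤ M * (log (M / Q) + (M / Q)⁻¹) := by
            gcongr
            exact log_add_one_le_log_add_inv (by positivity)
          rw [mul_add, inv_div, mul_div_cancel₀ _ hM.ne'] at hlogM
          linarith
      _ ≤ M * (log (Q + 1) - log (a + 1)) := by
          rw [← mul_sub]
          gcongr
      _ ≤ _ := by
          gcongr
          exact log_sub_log_le_sum_Ico_inv haQ
  have hlog : log ((Q : ℝ) ^ 2 / M) = log Q - log (M / Q) := by
    rw [← log_div hQ.ne' (by positivity), div_div_eq_mul_div, sq]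
  rw [← sum_range_add_sum_Ico _ haQ, hhead, htail, hlog]
  linarith

lemma min_div_sub_one_le_card {Q : ℕ} {M x : ℝ} (hM : 0 ≤ M) (hx : 0 < x) :
    min (Q : ℝ) (M / x) - 1 ≤ #{j : Fin Q | x * ((j : ℝ) + 1) ≤ M} := by
  have hcard : min Q ⌊M / x⌋₊ ≤ #{j : Fin Q | x * ((j : ℝ) + 1) ≤ M} := by
    rw [← Fin.card_filter_val_lt]
    refine card_le_card (monotone_filter_right _ fun j _ hj ↦ ?_)
    have hj : ((j + 1 : ℕ) : ℝ) ≤ M / x := (Nat.le_floor_iff (by positivity)).1 hj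
    rw [le_div_iff₀' hx] at hj
    exact_mod_cast hj
  calc min (Q : ℝ) (M / x) - 1 ≤ min (Q : ℝ) ⌊M / x⌋₊ := by
        rw [sub_le_iff_le_add, ← min_add_add_right]
        exact min_le_min (by linarith) (Nat.lt_floor_add_one _).le
    _ ≤ _ := by exact_mod_cast hcard

lemma mul_one_add_log_sub_le_card_hyperbola {Q : ℕ} {M : ℝ} (hM : 0 < M)
    (hMQ : M ≤ (Q : ℝ) ^ 2) :
    M * (1 + log ((Q : ℝ) ^ 2 / M)) - 3 * Q ≤
      #{e : Fin Q × Fin Q | ((e.1 : ℝ) + 1) * ((e.2 : ℝ) + 1) ≤ M} := by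
  calc M * (1 + log ((Q : ℝ) ^ 2 / M)) - 3 * Q
      ≤ ∑ i ∈ range Q, min (Q : ℝ) (M / (i + 1)) - Q := by
        linarith [mul_one_add_log_sub_le_sum_min hM hMQ]
    _ = ∑ i : Fin Q, (min (Q : ℝ) (M / (i + 1)) - 1) := by
        rw [sum_sub_distrib, sum_range]
        simp
    _ ≤ ∑ i : Fin Q, (#{j : Fin Q | ((i : ℝ) + 1) * ((j : ℝ) + 1) ≤ M} : ℝ) := by
        gcongr with i
        exact min_div_sub_one_le_card hM.le (by positivity)
    _ = _ := by
        simp only [card_filter, ← univ_product_univ, sum_product]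
        push_cast
        rfl

/-- The unordered pairs `{i, j}` of distinct `k ≤ i, j < Q` with `(i + 1) (j + 1) ≤ M`. The shift
by one makes `i + 1` the rank of the `i`-th prime when primes are enumerated from zero. -/
noncomputable def hyperbolaEdges (Q k : ℕ) (M : ℝ) : Finset (Sym2 (Fin Q)) :=
  ({e : Fin Q × Fin Q | k ≤ e.1 ∧ k ≤ e.2 ∧ e.1 ≠ e.2 ∧ ((e.1 : ℝ) + 1) * ((e.2 : ℝ) + 1) ≤ M}
    : Finset (Fin Q × Fin Q)).image Sym2.mk.uncurry

lemma mem_hyperbolaEdges {Q k : ℕ} {M : ℝ} {e : Sym2 (Fin Q)} :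
    e ∈ hyperbolaEdges Q k M ↔ ∃ i j : Fin Q, (k ≤ i ∧ k ≤ j ∧ i ≠ j ∧
      ((i : ℝ) + 1) * ((j : ℝ) + 1) ≤ M) ∧ s(i, j) = e := by
  simp [hyperbolaEdges]

lemma card_hyperbola_le {Q : ℕ} (k : ℕ) (M : ℝ) :
    #{e : Fin Q × Fin Q | ((e.1 : ℝ) + 1) * ((e.2 : ℝ) + 1) ≤ M} ≤
      2 * #(hyperbolaEdges Q k M) + (1 + 2 * k) * Q := by
  set D : Finset (Fin Q × Fin Q) :=
    {e | k ≤ e.1 ∧ k ≤ e.2 ∧ e.1 ≠ e.2 ∧ ((e.1 : ℝ) + 1) * ((e.2 : ℝ) + 1) ≤ M}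
  let low : Finset (Fin Q) := {i | (i : ℕ) < k}
  have hlow : #low ≤ k := (Fin.card_filter_val_lt).trans_le (min_le_right _ _)
  have hD : #D ≤ 2 * #(hyperbolaEdges Q k M) := by
    refine card_le_mul_card_image D 2 fun e _ ↦ ?_
    induction e with
    | _ i j =>
      refine (card_le_card (t := {(i, j), (j, i)}) fun x hx ↦ ?_).trans card_le_two
      obtain ⟨u, v⟩ := x
      simpa using (mem_filter.1 hx).2
  have hcover : ({e | ((e.1 : ℝ) + 1) * ((e.2 : ℝ) + 1) ≤ M} : Finset (Fin Q × Fin Q)) ⊆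
      D ∪ univ.diag ∪ low ×ˢ univ ∪ univ ×ˢ low := by
    intro e he
    simp only [D, low, mem_union, mem_filter, mem_diag, mem_product, mem_univ, true_and,
      and_true] at he ⊢
    grind
  calc _ ≤ #D + #(univ : Finset (Fin Q)).diag + #(low ×ˢ univ) + #(univ ×ˢ low) := by
        grw [card_le_card hcover, card_union_le, card_union_le, card_union_le]
    _ ≤ 2 * #(hyperbolaEdges Q k M) + Q + k * Q + Q * k := by
        simp only [card_product, diag_card, card_univ, Fintype.card_fin]
        gcongr
    _ = _ := by ring

lemma mul_one_add_log_sub_le_card_hyperbolaEdges {Q : ℕ} (k : ℕ) {M : ℝ} (hM : 0 < M)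
    (hMQ : M ≤ (Q : ℝ) ^ 2) :
    M * (1 + log ((Q : ℝ) ^ 2 / M)) - (4 + 2 * k) * Q ≤ 2 * #(hyperbolaEdges Q k M) := by
  have hcard : (#{e : Fin Q × Fin Q | ((e.1 : ℝ) + 1) * ((e.2 : ℝ) + 1) ≤ M} : ℝ) ≤
      2 * #(hyperbolaEdges Q k M) + (1 + 2 * k) * Q := by
    exact_mod_cast card_hyperbola_le k M
  linarith [mul_one_add_log_sub_le_card_hyperbola hM hMQ]

end Hyperbola

section Primes

lemma exists_prime_lt_and_le_two_mul_real {y : ℝ} (hy : 1 ≤ y) :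
    ∃ q : ℕ, q.Prime ∧ y < q ∧ (q : ℝ) ≤ 2 * y := by
  obtain ⟨q, hq, hlt, hle⟩ := Nat.exists_prime_lt_and_le_two_mul ⌊y⌋₊ (Nat.floor_pos.2 hy).ne'
  refine ⟨q, hq, Nat.lt_of_floor_lt hlt, ?_⟩
  calc (q : ℝ) ≤ 2 * ⌊y⌋₊ := by exact_mod_cast hle
    _ ≤ 2 * y := by gcongr; exact Nat.floor_le (by linarith)

lemma sub_one_mul_log_two_le_log {u : ℝ} (h₁ : 1 ≤ u) (h₂ : u ≤ 2) : (u - 1) * log 2 ≤ log u := by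
  have h := strictConcaveOn_log_Ioi.concaveOn.2 (Set.mem_Ioi.2 one_pos) (Set.mem_Ioi.2 two_pos)
    (sub_nonneg.2 h₂) (sub_nonneg.2 h₁) (by ring)
  have hu : (2 - u) * 1 + (u - 1) * 2 = u := by ring
  simpa only [smul_eq_mul, hu, log_one, mul_zero, zero_add] using h

/-- The choice `M = e y⁴ / 16` makes `(1 + log (q⁴ / M)) / q` take the same value at both ends of
Bertrand's window `y ≤ q ≤ 2 y`; in between, concavity of `log` makes it larger. -/
lemma mul_log_two_le_mul_one_add_log {y q : ℝ} (hy : 0 < y) (hyq : y ≤ q) (hqy : q ≤ 2 * y) :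
    exp 1 / 4 * log 2 * y ^ 3 * q ≤
      exp 1 / 16 * y ^ 4 * (1 + log (q ^ 4 / (exp 1 / 16 * y ^ 4))) := by
  have hlog : 1 + log (q ^ 4 / (exp 1 / 16 * y ^ 4)) = 4 * log 2 + 4 * log (q / y) := by
    have hsplit : q ^ 4 / (exp 1 / 16 * y ^ 4) = (2 * (q / y)) ^ 4 / exp 1 := by
      field_simp
      norm_num
    have hqy0 : 0 < q / y := div_pos (by linarith) hy
    rw [hsplit, log_div (by positivity) (by positivity), log_exp, log_pow,
      log_mul two_ne_zero hqy0.ne']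
    push_cast
    ring
  have hconcave := sub_one_mul_log_two_le_log ((one_le_div hy).2 hyq) ((div_le_iff₀ hy).2 hqy)
  calc exp 1 / 4 * log 2 * y ^ 3 * q = exp 1 / 16 * y ^ 4 * (4 * (q / y * log 2)) := by
        field_simp
        ring
    _ ≤ _ := by
        rw [hlog]
        gcongr
        linarith

lemma exists_mulSidon_nth_prime_mul_nth_prime {q : ℕ} (hq : q.Prime) (k : ℕ) {M : ℝ} (hM : 0 < M)
    (hMq : M ≤ (q : ℝ) ^ 4) :
    ∃ E : Finset ℕ, MulSidon E ∧
      M * (1 + log ((q : ℝ) ^ 4 / M)) - (4 + 2 * k) * (q : ℝ) ^ 2 ≤ 2 * (q * #E) ∧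
      ∀ x ∈ E, ∃ i j : ℕ, (k ≤ i ∧ i < q ^ 2) ∧ (k ≤ j ∧ j < q ^ 2) ∧
        ((i : ℝ) + 1) * ((j : ℝ) + 1) ≤ M ∧ x = Nat.nth Nat.Prime i * Nat.nth Nat.Prime j := by
  have : Fact q.Prime := ⟨hq⟩
  have hq4 : ((q ^ 2 : ℕ) : ℝ) ^ 2 = (q : ℝ) ^ 4 := by push_cast; ring
  let D := hyperbolaEdges (q ^ 2) k M
  have hD : ∀ e ∈ D, ¬e.IsDiag := by
    intro e he
    obtain ⟨i, j, ⟨-, -, hij, -⟩, rfl⟩ := mem_hyperbolaEdges.1 he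
    exact hij
  have hDcard := mul_one_add_log_sub_le_card_hyperbolaEdges k hM (hMq.trans_eq hq4.symm)
  rw [hq4, Nat.cast_pow] at hDcard
  let label (v : Fin (q ^ 2)) : ℕ := Nat.nth Nat.Prime v
  have hprime (v : Fin (q ^ 2)) : (label v).Prime := Nat.prime_nth_prime v
  have hinj : label.Injective := fun _ _ h ↦
    Fin.val_injective (Nat.nth_injective Nat.infinite_setOfPred_prime h)
  let plane : Fin (q ^ 2) ≃ ZMod q × ZMod q := Fintype.equivOfCardEq (by simp [ZMod.card, sq])
  obtain ⟨E, hED, hE, hcard⟩ :=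
    exists_mulSidon_subset_image_edgeProd hprime hinj plane.toEmbedding hD
  rw [ZMod.card] at hcard
  refine ⟨E, hE, hDcard.trans ?_, fun x hx ↦ ?_⟩
  · gcongr
    exact_mod_cast hcard
  · obtain ⟨e, he, rfl⟩ := mem_image.1 (hED hx)
    obtain ⟨i, j, ⟨hki, hkj, -, hij⟩, rfl⟩ := mem_hyperbolaEdges.1 he
    exact ⟨i, j, ⟨hki, i.isLt⟩, ⟨hkj, j.isLt⟩, hij, rfl⟩

lemma exists_mulSidon_nth_prime_mul_nth_prime_of_one_le (k : ℕ) {y : ℝ} (hy : 1 ≤ y) :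
    ∃ E : Finset ℕ, MulSidon E ∧ exp 1 / 8 * log 2 * y ^ 3 - (4 + 2 * k) * y ≤ #E ∧
      ∀ x ∈ E, ∃ i j : ℕ, (k ≤ i ∧ (i : ℝ) + 1 ≤ 4 * y ^ 2) ∧ (k ≤ j ∧ (j : ℝ) + 1 ≤ 4 * y ^ 2) ∧
        ((i : ℝ) + 1) * ((j : ℝ) + 1) ≤ exp 1 / 16 * y ^ 4 ∧
        x = Nat.nth Nat.Prime i * Nat.nth Nat.Prime j := by
  obtain ⟨q, hq, hyq, hqy⟩ := exists_prime_lt_and_le_two_mul_real hy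
  have hMq : exp 1 / 16 * y ^ 4 ≤ (q : ℝ) ^ 4 := by
    have he : exp 1 / 16 ≤ 1 := by linarith [exp_one_lt_d9]
    calc exp 1 / 16 * y ^ 4 ≤ 1 * (q : ℝ) ^ 4 := by gcongr
      _ = (q : ℝ) ^ 4 := one_mul _
  obtain ⟨E, hE, hcard, hEmem⟩ :=
    exists_mulSidon_nth_prime_mul_nth_prime hq k (by positivity) hMq
  refine ⟨E, hE, ?_, fun x hx ↦ ?_⟩
  · have hmain := mul_log_two_le_mul_one_add_log (by linarith) hyq.le hqy
    have hdiv : exp 1 / 8 * log 2 * y ^ 3 - (2 + k) * q ≤ #E :=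
      le_of_mul_le_mul_left (by linarith) (by linarith : (0 : ℝ) < q)
    have hk : (2 + k : ℝ) * q ≤ (2 + k) * (2 * y) := by gcongr
    linarith
  · obtain ⟨i, j, ⟨hki, hiq⟩, ⟨hkj, hjq⟩, hij, rfl⟩ := hEmem x hx
    have hle {v : ℕ} (hv : v < q ^ 2) : (v : ℝ) + 1 ≤ 4 * y ^ 2 :=
      calc (v : ℝ) + 1 ≤ (q : ℝ) ^ 2 := by exact_mod_cast hv
        _ ≤ (2 * y) ^ 2 := by gcongr
        _ = 4 * y ^ 2 := by ring
    exact ⟨i, j, ⟨hki, hle hiq⟩, ⟨hkj, hle hjq⟩, hij, rfl⟩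

lemma primeCounting_nth_prime (i : ℕ) : Nat.primeCounting (Nat.nth Nat.Prime i) = i + 1 := by
  rw [Nat.primeCounting, Nat.primeCounting', Nat.count_succ,
    Nat.count_nth_of_infinite Nat.infinite_setOfPred_prime, if_pos (Nat.prime_nth_prime i)]

lemma eventually_mul_nth_prime_lt_mul_log {δ : ℝ} (hδ : δ < log 2) :
    ∀ᶠ i : ℕ in atTop,
      δ * Nat.nth Nat.Prime i < ((i : ℝ) + 1) * log (Nat.nth Nat.Prime i) := by
  have hlog : ∀ᶠ x : ℝ in atTop, log (x + 1) < (log 2 - δ) * x := by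
    have hη : 0 < (log 2 - δ) / 4 := by linarith
    have hbound := (tendsto_atTop_add_const_right atTop (1 : ℝ) tendsto_id).eventually
      (isLittleO_log_id_atTop.bound hη)
    filter_upwards [hbound, eventually_ge_atTop 1] with x hx hx1
    rw [id, id, norm_of_nonneg (by linarith : 0 ≤ x + 1)] at hx
    nlinarith [le_norm_self (log (x + 1))]
  have htendsto : Tendsto (fun i ↦ (Nat.nth Nat.Prime i : ℝ)) atTop atTop :=
    tendsto_natCast_atTop_atTop.comp
      (Nat.nth_strictMono Nat.infinite_setOfPred_prime).tendsto_atTop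
  filter_upwards [htendsto.eventually hlog] with i hi
  have hp : (1 : ℝ) < Nat.nth Nat.Prime i := by exact_mod_cast (Nat.prime_nth_prime i).one_lt
  have hpi := Chebyshev.pi_ge (Nat.nth Nat.Prime i)
  rw [div_le_iff₀ (log_pos hp), primeCounting_nth_prime] at hpi
  push_cast at hpi
  linarith

lemma log_sq_div_antitoneOn : AntitoneOn (fun x : ℝ ↦ log x ^ 2 / x) (.Ici (exp 2)) := by
  intro x hx y hy hxy
  have hpos {z : ℝ} (hz : z ∈ Set.Ici (exp 2)) : 0 < z := (exp_pos 2).trans_le hz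
  have hsq {z : ℝ} (hz : z ∈ Set.Ici (exp 2)) : log z ^ 2 / z = (log z / √z) ^ 2 := by
    rw [div_pow, sq_sqrt (hpos hz).le]
  simp only [hsq hx, hsq hy]
  have hlog : 0 ≤ log y := ((le_log_iff_exp_le (hpos hy)).2 hy).trans' zero_le_two
  exact pow_le_pow_left₀ (by positivity) (log_div_sqrt_antitoneOn hx hy hxy) 2

/-- By AM-GM `4 log x log y ≤ log² (x y)`, so `x y / log² (x y) < I J / (2 δ)²`, while `t / log² t`
is increasing. -/
lemma mul_le_of_mul_lt_mul_log {δ x y I J N : ℝ} (hδ : 0 < δ) (hx : 1 < x) (hy : 1 < y)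
    (hI : δ * x < I * log x) (hJ : δ * y < J * log y) (hN : exp 2 ≤ N)
    (hIJ : I * J ≤ (2 * δ) ^ 2 * (N / log N ^ 2)) : x * y ≤ N := by
  by_contra! hlt
  have hlogx : 0 < log x := log_pos hx
  have hlogy : 0 < log y := log_pos hy
  have : 0 < I := pos_of_mul_pos_left ((by positivity : 0 < δ * x).trans hI) hlogx.le
  have : 0 < J := pos_of_mul_pos_left ((by positivity : 0 < δ * y).trans hJ) hlogy.le
  have hN0 : 0 < N := (exp_pos 2).trans_le hN
  have hlogN : 0 < log N := ((le_log_iff_exp_le hN0).2 hN).trans_lt' two_pos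
  have hmono : N / log N ^ 2 * log (x * y) ^ 2 ≤ x * y := by
    have h : log (x * y) ^ 2 / (x * y) ≤ log N ^ 2 / N :=
      log_sq_div_antitoneOn hN (hN.trans hlt.le) hlt.le
    rw [div_le_div_iff₀ (by positivity) hN0] at h
    rw [div_mul_eq_mul_div, div_le_iff₀ (by positivity)]
    linarith
  have hamgm : 4 * (log x * log y) ≤ log (x * y) ^ 2 := by
    rw [log_mul (by positivity) (by positivity)]
    linarith [four_mul_le_sq_add (log x) (log y)]
  refine lt_irrefl ((2 * δ) ^ 2 * (x * y)) ?_
  calc (2 * δ) ^ 2 * (x * y) = 4 * ((δ * x) * (δ * y)) := by ring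
    _ < 4 * ((I * log x) * (J * log y)) := by gcongr
    _ = I * J * (4 * (log x * log y)) := by ring
    _ ≤ (2 * δ) ^ 2 * (N / log N ^ 2) * log (x * y) ^ 2 := by gcongr
    _ ≤ (2 * δ) ^ 2 * (x * y) := by rw [mul_assoc]; gcongr

end Primes

section Assembly

lemma T_mul_two_pow_card_le_S {n : ℕ} {E : Finset ℕ} (hE : MulSidon E) (hEn : E ⊆ Icc 1 n)
    (hEp : ∀ e ∈ E, ∀ p, p.Prime → p ∣ e → (p : ℝ) ≤ (n : ℝ) ^ ((2 : ℝ) / 3)) :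
    T n * 2 ^ #E ≤ S n := by
  refine prod_div_add_one_mul_two_pow_card_le_S (fun p hp ↦ ?_) hE hEn fun p hp e he hpe ↦ ?_
  · obtain ⟨hpn, hp, hlt⟩ := mem_filter.1 hp
    have hn : (1 : ℝ) ≤ n := by
      have := mem_Icc.1 hpn
      exact_mod_cast this.1.trans this.2
    refine ⟨hp, ?_⟩
    suffices (n : ℝ) < p * p by exact_mod_cast this
    calc (n : ℝ) ≤ (n : ℝ) ^ ((2 : ℝ) / 3 + 2 / 3) := self_le_rpow_of_one_le hn (by norm_num)
      _ = (n : ℝ) ^ ((2 : ℝ) / 3) * (n : ℝ) ^ ((2 : ℝ) / 3) := rpow_add (by linarith) _ _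
      _ < p * p := mul_self_lt_mul_self (by positivity) hlt
  · obtain ⟨-, hp, hlt⟩ := mem_filter.1 hp
    exact hlt.not_ge (hEp e he p hp hpe)

lemma exists_T_mul_two_pow_le_S {δ y : ℝ} {k n : ℕ} (hδ : 0 < δ)
    (hk : ∀ i ≥ k, δ * Nat.nth Nat.Prime i < ((i : ℝ) + 1) * log (Nat.nth Nat.Prime i))
    (hn : exp 2 ≤ n) (hy : 1 ≤ y) (hyn : exp 1 / 16 * y ^ 4 = (2 * δ) ^ 2 * (n / log n ^ 2))
    (hsmall : 4 * y ^ 2 * log n ≤ δ * (n : ℝ) ^ ((2 : ℝ) / 3)) :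
    ∃ m : ℕ, exp 1 / 8 * log 2 * y ^ 3 - (4 + 2 * k) * y ≤ m ∧ T n * 2 ^ m ≤ S n := by
  obtain ⟨E, hE, hcard, hEmem⟩ := exists_mulSidon_nth_prime_mul_nth_prime_of_one_le k hy
  have hprime (i : ℕ) : (1 : ℝ) < Nat.nth Nat.Prime i := by
    exact_mod_cast (Nat.prime_nth_prime i).one_lt
  have hEn : E ⊆ Icc 1 n := by
    intro x hx
    obtain ⟨i, j, ⟨hi, -⟩, ⟨hj, -⟩, hij, rfl⟩ := hEmem x hx
    refine mem_Icc.2 ⟨Nat.mul_pos (Nat.prime_nth_prime i).pos (Nat.prime_nth_prime j).pos, ?_⟩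
    exact_mod_cast mul_le_of_mul_lt_mul_log hδ (hprime i) (hprime j) (hk i hi) (hk j hj) hn
      (hij.trans_eq hyn)
  have hle {i : ℕ} (hi : k ≤ i ∧ (i : ℝ) + 1 ≤ 4 * y ^ 2) (hin : Nat.nth Nat.Prime i ≤ n) :
      (Nat.nth Nat.Prime i : ℝ) ≤ (n : ℝ) ^ ((2 : ℝ) / 3) := by
    refine le_of_mul_le_mul_left ?_ hδ
    calc δ * Nat.nth Nat.Prime i ≤ ((i : ℝ) + 1) * log (Nat.nth Nat.Prime i) := (hk i hi.1).le
      _ ≤ 4 * y ^ 2 * log n := by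
        have := (hprime i).trans' one_pos
        gcongr
        exact hi.2
      _ ≤ _ := hsmall
  refine ⟨#E, hcard, T_mul_two_pow_card_le_S hE hEn fun e he p hp hpe ↦ ?_⟩
  have hpn : p ≤ n := have := mem_Icc.1 (hEn he); (Nat.le_of_dvd this.1 hpe).trans this.2
  obtain ⟨i, j, hi, hj, -, rfl⟩ := hEmem e he
  rcases hp.dvd_mul.1 hpe with h | h <;>
    obtain rfl := (Nat.prime_dvd_prime_iff_eq hp (Nat.prime_nth_prime _)).1 h
  · exact hle hi hpn
  · exact hle hj hpn

/-- The order of magnitude `n^(1/4) / (log n)^(1/2)` of the size of the field whose polarity graphs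
are used for `n`. -/
noncomputable def fieldScale (n : ℕ) : ℝ := √(√n / log n)

lemma fieldScale_sq (n : ℕ) : fieldScale n ^ 2 = √n / log n :=
  sq_sqrt (div_nonneg (sqrt_nonneg _) (log_natCast_nonneg n))

lemma fieldScale_pow_three (n : ℕ) :
    fieldScale n ^ 3 = (n : ℝ) ^ ((3 : ℝ) / 4) / log n ^ ((3 : ℝ) / 2) := by
  have hlog := log_natCast_nonneg n
  rw [fieldScale, sqrt_eq_rpow, sqrt_eq_rpow, ← rpow_mul_natCast (by positivity),
    div_rpow (by positivity) hlog, ← rpow_mul (by positivity)]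
  norm_num

lemma tendsto_fieldScale_atTop : Tendsto fieldScale atTop atTop := by
  have hreal : Tendsto (fun x : ℝ ↦ √x / log x) atTop atTop := by
    have hlittleO : log =o[atTop] fun x : ℝ ↦ √x := by
      simpa only [sqrt_eq_rpow] using isLittleO_log_rpow_atTop (r := 1 / 2) (by norm_num)
    have hzero := hlittleO.tendsto_div_nhds_zero
    refine (Tendsto.inv_tendsto_nhdsGT_zero (tendsto_nhdsWithin_iff.2 ⟨hzero, ?_⟩)).congr
      fun x ↦ inv_div _ _
    filter_upwards [eventually_gt_atTop 1] with x hx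
    exact div_pos (log_pos hx) (sqrt_pos.2 (by linarith))
  exact tendsto_sqrt_atTop.comp (hreal.comp tendsto_natCast_atTop_atTop)

lemma eventually_const_mul_sqrt_le_rpow_two_thirds (C : ℝ) :
    ∀ᶠ n : ℕ in atTop, C * √n ≤ (n : ℝ) ^ ((2 : ℝ) / 3) := by
  have hrpow : Tendsto (fun n : ℕ ↦ (n : ℝ) ^ ((1 : ℝ) / 6)) atTop atTop :=
    (tendsto_rpow_atTop (by norm_num)).comp tendsto_natCast_atTop_atTop
  filter_upwards [hrpow.eventually_ge_atTop C, eventually_gt_atTop 0] with n hC hn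
  calc C * √n ≤ (n : ℝ) ^ ((1 : ℝ) / 6) * √n := by gcongr
    _ = (n : ℝ) ^ ((2 : ℝ) / 3) := by
      rw [sqrt_eq_rpow, ← rpow_add (by exact_mod_cast hn)]
      norm_num

lemma eventually_mul_pow_three_le {c K : ℝ} (hcK : c < K) (B : ℝ) :
    ∀ᶠ r : ℝ in atTop, c * r ^ 3 ≤ K * r ^ 3 - B * r := by
  have hsq : Tendsto (fun r : ℝ ↦ (K - c) * r ^ 2) atTop atTop :=
    (tendsto_pow_atTop two_ne_zero).const_mul_atTop (sub_pos.2 hcK)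
  filter_upwards [hsq.eventually_ge_atTop B, eventually_ge_atTop 0] with r hB hr
  nlinarith

lemma eventually_exists_T_mul_two_pow_le_S {c δ : ℝ} (hδ : 0 < δ) (hδ₂ : δ < log 2)
    (hc : c < exp 1 / 8 * log 2 * √(8 * δ * exp (-1 / 2)) ^ 3) :
    ∀ᶠ n : ℕ in atTop, ∃ m : ℕ, c * fieldScale n ^ 3 ≤ m ∧ T n * 2 ^ m ≤ S n := by
  obtain ⟨k, hk⟩ := eventually_atTop.1 (eventually_mul_nth_prime_lt_mul_log hδ₂)
  set b := √(8 * δ * exp (-1 / 2))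
  have hb0 : 0 < b := by positivity
  have hb2 : b ^ 2 = 8 * δ * exp (-1 / 2) := sq_sqrt (by positivity)
  have hb4 : exp 1 / 16 * b ^ 4 = (2 * δ) ^ 2 := by
    have hexp : exp 1 * exp (-1 / 2) ^ 2 = 1 := by
      rw [← exp_nat_mul, ← exp_add]
      norm_num
    calc exp 1 / 16 * b ^ 4 = exp 1 / 16 * (b ^ 2) ^ 2 := by ring
      _ = (2 * δ) ^ 2 * (exp 1 * exp (-1 / 2) ^ 2) := by rw [hb2]; ring
      _ = (2 * δ) ^ 2 := by rw [hexp, mul_one]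
  filter_upwards [(tendsto_fieldScale_atTop.const_mul_atTop hb0).eventually_ge_atTop 1,
    tendsto_fieldScale_atTop.eventually (eventually_mul_pow_three_le hc ((4 + 2 * k) * b)),
    tendsto_natCast_atTop_atTop.eventually_ge_atTop (exp 2),
    eventually_const_mul_sqrt_le_rpow_two_thirds (32 * exp (-1 / 2))] with n hy hcube hn hsqrt
  have hlog : 0 < log n :=
    ((le_log_iff_exp_le ((exp_pos 2).trans_le hn)).2 hn).trans_lt' two_pos
  obtain ⟨m, hm, hTS⟩ := exists_T_mul_two_pow_le_S hδ hk hn hy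
    (by
      calc exp 1 / 16 * (b * fieldScale n) ^ 4
          = exp 1 / 16 * b ^ 4 * (fieldScale n ^ 2) ^ 2 := by ring
        _ = (2 * δ) ^ 2 * (n / log n ^ 2) := by
          rw [hb4, fieldScale_sq, div_pow, sq_sqrt n.cast_nonneg])
    (by
      calc 4 * (b * fieldScale n) ^ 2 * log n = 4 * b ^ 2 * (fieldScale n ^ 2 * log n) := by ring
        _ = δ * (32 * exp (-1 / 2) * √n) := by
          rw [hb2, fieldScale_sq, div_mul_cancel₀ _ hlog.ne']
          ring
        _ ≤ δ * (n : ℝ) ^ ((2 : ℝ) / 3) := by gcongr)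
  exact ⟨m, by linarith [mul_pow b (fieldScale n) 3], hTS⟩

lemma exp_div_eight_mul_log_two_mul_sqrt_pow_three :
    exp 1 / 8 * log 2 * √(8 * log 2 * exp (-1 / 2)) ^ 3 =
      2 * √2 * exp (1 / 4) * log 2 ^ ((5 : ℝ) / 2) := by
  have hlog : 0 < log 2 := log_pos one_lt_two
  have hexp : exp 1 ^ 2 * exp (-1 / 2) ^ 3 = exp (1 / 4) ^ 2 := by
    simp only [← exp_nat_mul, ← exp_add]
    norm_num
  have hrpow : (log 2 ^ ((5 : ℝ) / 2)) ^ 2 = log 2 ^ 5 := by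
    rw [← rpow_mul_natCast hlog.le, ← rpow_natCast]
    norm_num
  refine (pow_left_inj₀ (by positivity) (by positivity) two_ne_zero).1 ?_
  calc (exp 1 / 8 * log 2 * √(8 * log 2 * exp (-1 / 2)) ^ 3) ^ 2
      = exp 1 ^ 2 / 64 * log 2 ^ 2 * (√(8 * log 2 * exp (-1 / 2)) ^ 2) ^ 3 := by ring
    _ = 8 * (exp 1 ^ 2 * exp (-1 / 2) ^ 3) * log 2 ^ 5 := by
      rw [sq_sqrt (by positivity)]
      ring
    _ = 4 * √2 ^ 2 * exp (1 / 4) ^ 2 * (log 2 ^ ((5 : ℝ) / 2)) ^ 2 := by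
      rw [hexp, hrpow, sq_sqrt zero_le_two]
      ring
    _ = (2 * √2 * exp (1 / 4) * log 2 ^ ((5 : ℝ) / 2)) ^ 2 := by ring

lemma exists_lt_log_two_of_lt {c : ℝ} (hc : c < 2 * √2 * exp (1 / 4) * log 2 ^ ((5 : ℝ) / 2)) :
    ∃ δ, 0 < δ ∧ δ < log 2 ∧ c < exp 1 / 8 * log 2 * √(8 * δ * exp (-1 / 2)) ^ 3 := by
  have hcont : Continuous fun δ ↦ exp 1 / 8 * log 2 * √(8 * δ * exp (-1 / 2)) ^ 3 := by fun_prop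
  rw [← exp_div_eight_mul_log_two_mul_sqrt_pow_three] at hc
  have hnear : ∀ᶠ δ in nhdsWithin (log 2) (Set.Iio (log 2)),
      c < exp 1 / 8 * log 2 * √(8 * δ * exp (-1 / 2)) ^ 3 :=
    nhdsWithin_le_nhds (hcont.continuousAt.eventually_const_lt hc)
  obtain ⟨δ, hcδ, hδ⟩ := (hnear.and (Ioo_mem_nhdsLT (log_pos one_lt_two))).exists
  exact ⟨δ, hδ.1, hδ.2, hcδ⟩

lemma sqrt_two_lt_two_mul_sqrt_two_mul_exp_mul_log_two_rpow :
    √2 < 2 * √2 * exp (1 / 4) * log 2 ^ ((5 : ℝ) / 2) := by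
  have hexp : 1.28 ≤ exp (1 / 4) := by
    linarith [quadratic_le_exp_of_nonneg (show (0 : ℝ) ≤ 1 / 4 by norm_num)]
  have hlog : 0.693 ≤ log 2 := by linarith [log_two_gt_d9]
  have hsqrt : 0.83 ≤ √(log 2) := le_sqrt_of_sq_le (by linarith)
  have hrpow : log 2 ^ ((5 : ℝ) / 2) = log 2 ^ 2 * √(log 2) := by
    rw [sqrt_eq_rpow, ← rpow_natCast, ← rpow_add (by linarith)]
    norm_num
  calc √2 = √2 * 1 := (mul_one _).symm
    _ < √2 * (2 * 1.28 * (0.693 ^ 2 * 0.83)) := by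
      gcongr
      norm_num
    _ ≤ √2 * (2 * exp (1 / 4) * (log 2 ^ 2 * √(log 2))) := by gcongr
    _ = 2 * √2 * exp (1 / 4) * log 2 ^ ((5 : ℝ) / 2) := by
      rw [hrpow]
      ring

theorem count_mulSidon_lower_general {c : ℝ}
    (hc : c < 2 * √2 * exp (1 / 4) * log 2 ^ ((5 : ℝ) / 2)) :
    ∀ᶠ n : ℕ in atTop,
      (T n : ℝ) * 2 ^ (c * (n : ℝ) ^ ((3 : ℝ) / 4) / log n ^ ((3 : ℝ) / 2)) ≤ S n := by
  obtain ⟨δ, hδ, hδ₂, hcδ⟩ := exists_lt_log_two_of_lt hc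
  filter_upwards [eventually_exists_T_mul_two_pow_le_S hδ hδ₂ hcδ] with n ⟨m, hm, hTS⟩
  rw [fieldScale_pow_three, ← mul_div_assoc] at hm
  calc (T n : ℝ) * 2 ^ (c * (n : ℝ) ^ ((3 : ℝ) / 4) / log n ^ ((3 : ℝ) / 2))
      ≤ T n * 2 ^ (m : ℝ) := by
        gcongr
        exact one_le_two
    _ ≤ S n := by exact_mod_cast hTS

end Assembly

theorem count_mulSidon_lower :
    ∀ ε : ℝ, 0 < ε → ∃ N : ℕ, ∀ n : ℕ, N ≤ n →
      (T n : ℝ) *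
        2 ^ ((Real.sqrt 2 - ε) * (n : ℝ) ^ ((3 : ℝ)/4) / (Real.log n) ^ ((3 : ℝ)/2))
      ≤ (S n : ℝ) := by
  intro ε hε
  exact eventually_atTop.1 <| count_mulSidon_lower_general <|
    (sub_lt_self _ hε).trans sqrt_two_lt_two_mul_sqrt_two_mul_exp_mul_log_two_rpow
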